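/- Let 𝒱 be an LCP-realizable oriented matroid on E_{2n} with realization matrix M ∈ ℝ^{n×n}. Then 𝒱 is a P-matroid if and only if M is a P-matrix. -/

import Mathlib

/-!
The vectors of `V` are the sign patterns of a linear subspace of `ℝ^{2n}`, the solution space of
`x_S = M x_T`. For any subspace `W`, the sign patterns satisfy the vector axioms: composition is
realized by `x + ε y` with `ε > 0` small, and elimination of `e` by `(-y e) x + (x e) y`.

A sign-reversing nonzero vector exists iff a sign-reversing circuit does: if `x ∈ W` is nonzero and
sign-reversing of minimal support and `y ∈ W` had strictly smaller support, then subtracting from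
`x` the largest multiple of `±y` that flips no sign would shrink the support of `x` further
(`exists_conformal_smaller`). So `V` is a P-matroid iff no `x ≠ 0` satisfies `xᵢ (M x)ᵢ ≤ 0` for
all `i`, and it remains to prove the Fiedler–Pták theorem that this characterizes P-matrices.

For the latter, consider the matrices `diag a * M + diag b` with `a, b ≥ 0` and `aᵢ + bᵢ > 0`.
The determinant is affine in each row, and is a principal minor when every `(aᵢ, bᵢ)` is `(1, 0)` or
`(0, 1)`; hence it is positive if `M` is a P-matrix. A vector `x` with `xᵢ (M x)ᵢ ≤ 0` is in
the kernel of such a matrix (`aᵢ = |xᵢ|`, `bᵢ = |(M x)ᵢ|`, or `(0, 1)` if `xᵢ = 0`), so `x = 0`.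
Conversely, if the principal minor on `s` is not positive, moving the rows in `s` linearly from
those of `M` to those of the identity, the other rows being identity rows, yields a singular matrix
of this form by the intermediate value theorem, and a kernel vector of it satisfies `xᵢ (M x)ᵢ ≤ 0`.
-/

/-- A matrix is a Z-matrix if all its off-diagonal entries are nonpositive. -/
def IsZMatrix {n : ℕ} (M : Matrix (Fin n) (Fin n) ℝ) : Prop :=
  ∀ i j, i ≠ j → M i j ≤ 0

/-- A matrix is a P-matrix if all its principal minors are positive. -/
def IsPMatrix {n : ℕ} (M : Matrix (Fin n) (Fin n) ℝ) : Prop :=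
  ∀ s : Finset (Fin n), s.Nonempty →
    0 < (M.submatrix (fun i : s => (i : Fin n)) (fun j : s => (j : Fin n))).det

/-- The support of a sign vector. -/
def supp {E : Type*} (X : E → SignType) : Set E := {e | X e ≠ 0}

/-- The positive part of a sign vector. -/
def posPart {E : Type*} (X : E → SignType) : Set E := {e | X e = 1}

/-- The negative part of a sign vector. -/
def negPart {E : Type*} (X : E → SignType) : Set E := {e | X e = -1}

/-- Composition of sign vectors. -/
def sComp {E : Type*} (X Y : E → SignType) : E → SignType :=
  fun e => if X e = 0 then Y e else X e

/-- The vector axioms of an oriented matroid. -/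
def IsOM {E : Type*} (V : Set (E → SignType)) : Prop :=
  (0 : E → SignType) ∈ V ∧
  (∀ X ∈ V, -X ∈ V) ∧
  (∀ X ∈ V, ∀ Y ∈ V, sComp X Y ∈ V) ∧
  (∀ X ∈ V, ∀ Y ∈ V, ∀ e, X e = 1 → Y e = -1 →
    ∃ Z ∈ V, Z e = 0 ∧
      posPart Z ⊆ posPart X ∪ posPart Y ∧
      negPart Z ⊆ negPart X ∪ negPart Y ∧
      (supp X \ supp Y) ∪ (supp Y \ supp X) ∪ (posPart X ∩ posPart Y) ∪
        (negPart X ∩ negPart Y) ⊆ supp Z)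

/-- A circuit: a nonzero vector of minimal nonempty support. -/
def IsCircuit {E : Type*} (V : Set (E → SignType)) (C : E → SignType) : Prop :=
  C ∈ V ∧ C ≠ 0 ∧ ∀ X ∈ V, X ≠ 0 → ¬ (supp X ⊂ supp C)

/-- Orthogonality of sign vectors. -/
def Orthogonal {E : Type*} (X Y : E → SignType) : Prop :=
  (Set.range (fun e => X e * Y e)) = {0} ∨
  ((1 : SignType) ∈ Set.range (fun e => X e * Y e) ∧
   (-1 : SignType) ∈ Set.range (fun e => X e * Y e))

/-- The covectors: all sign vectors orthogonal to every vector. -/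
def covectors {E : Type*} (V : Set (E → SignType)) : Set (E → SignType) :=
  {Y | ∀ X ∈ V, Orthogonal X Y}

/-- A basis: an inclusion-maximal set containing the support of no circuit. -/
def IsBasis {E : Type*} (V : Set (E → SignType)) (B : Set E) : Prop :=
  (∀ C, IsCircuit V C → ¬ supp C ⊆ B) ∧
  ∀ B' : Set E, B ⊂ B' → ∃ C, IsCircuit V C ∧ supp C ⊆ B'

/-- Sign-reversing sign vector. -/
def SignReversing {E : Type*} (bar : E → E) (X : E → SignType) : Prop :=
  ∀ e, X e * X (bar e) ≤ 0

/-- Totally sign-reversing sign vector. -/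
def TotallySignReversing {E : Type*} (bar : E → E) (X : E → SignType) : Prop :=
  SignReversing bar X ∧ supp X = Set.univ

/-- Sign-preserving sign vector. -/
def SignPreserving {E : Type*} (bar : E → E) (X : E → SignType) : Prop :=
  ∀ e, 0 ≤ X e * X (bar e)

/-- Totally sign-preserving sign vector. -/
def TotallySignPreserving {E : Type*} (bar : E → E) (X : E → SignType) : Prop :=
  SignPreserving bar X ∧ supp X = Set.univ

/-- A P-matroid: an oriented matroid with no sign-reversing circuit. -/
def IsPMatroid {E : Type*} (bar : E → E) (V : Set (E → SignType)) : Prop :=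
  IsOM V ∧ ∀ C, IsCircuit V C → ¬ SignReversing bar C

/-- A Z-matroid. -/
def IsZMatroid {E : Type*} (bar : E → E) (S T : Set E) (V : Set (E → SignType)) : Prop :=
  IsOM V ∧ ∀ C, IsCircuit V C → (∀ f ∈ T, 0 ≤ C f) → ∀ e ∈ S, C e = 1 → C (bar e) = 1

/-- A K-matroid: both a P-matroid and a Z-matroid. -/
def IsKMatroid {E : Type*} (bar : E → E) (S T : Set E) (V : Set (E → SignType)) : Prop :=
  IsPMatroid bar V ∧ IsZMatroid bar S T V

/-- The ground structure E_{2n}: a fixed-point-free involution `bar` and a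
partition into two n-element sets S, T with bar mapping S into T. -/
structure IsGround {E : Type*} (bar : E → E) (S T : Set E) (n : ℕ) : Prop where
  inv : ∀ e, bar (bar e) = e
  ff : ∀ e, bar e ≠ e
  union_eq : S ∪ T = Set.univ
  disj : Disjoint S T
  cardS : S.ncard = n
  cardT : T.ncard = n
  barS : ∀ e ∈ S, bar e ∈ T

/-- `V` is the LCP-realizable oriented matroid on `Fin n ⊕ Fin n` (the left
summand playing the role of S = {1,…,n}, the right summand that of
T = {n+1,…,2n}, with the involution swapping the two copies) realized by `M`,
i.e. `V = { sgn x : [Iₙ −M] x = 0 }`. -/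
def Realizes {n : ℕ} (M : Matrix (Fin n) (Fin n) ℝ)
    (V : Set (Fin n ⊕ Fin n → SignType)) : Prop :=
  V = { X | ∃ x : Fin n ⊕ Fin n → ℝ,
        (∀ i, x (Sum.inl i) = M.mulVec (fun j => x (Sum.inr j)) i) ∧
        ∀ e, X e = SignType.sign (x e) }

/-! ### Oriented matroids of linear subspaces -/

/-- The set of sign patterns of the elements of a linear subspace `W` of `ℝ^E`. -/
def signVectors {E : Type*} (W : Submodule ℝ (E → ℝ)) : Set (E → SignType) :=
  {X | ∃ x ∈ W, ∀ e, X e = SignType.sign (x e)}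

lemma exists_sign_eq_sComp {E : Type*} [Finite E] (x y : E → ℝ) :
    ∃ ε : ℝ, ∀ e, SignType.sign (x e + ε * y e) =
      sComp (fun e => SignType.sign (x e)) (fun e => SignType.sign (y e)) e := by
  have h : ∀ᶠ ε : ℝ in nhdsWithin 0 (Set.Ioi 0), ∀ e, SignType.sign (x e + ε * y e) =
      sComp (fun e => SignType.sign (x e)) (fun e => SignType.sign (y e)) e := by
    rw [Filter.eventually_all]
    intro e
    have hc : Filter.Tendsto (fun ε : ℝ => x e + ε * y e) (nhdsWithin 0 (Set.Ioi 0))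
        (nhds (x e)) := by
      have : Continuous (fun ε : ℝ => x e + ε * y e) := by fun_prop
      have h0 := this.tendsto 0
      simp only [zero_mul, add_zero] at h0
      exact h0.mono_left nhdsWithin_le_nhds
    rcases lt_trichotomy (x e) 0 with hx | hx | hx
    · filter_upwards [hc.eventually_lt_const hx] with ε hε
      simp [sComp, sign_neg hx, sign_neg hε]
    · filter_upwards [self_mem_nhdsWithin] with ε hε
      have hε : (0 : ℝ) < ε := hε
      simp [sComp, hx, sign_mul, sign_pos hε]
    · filter_upwards [hc.eventually_const_lt hx] with ε hε
      simp [sComp, sign_pos hx, sign_pos hε]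
  exact h.exists

lemma isOM_signVectors {E : Type*} [Finite E] (W : Submodule ℝ (E → ℝ)) :
    IsOM (signVectors W) := by
  refine ⟨⟨0, W.zero_mem, by simp⟩, ?_, ?_, ?_⟩
  · rintro X ⟨x, hx, hX⟩
    exact ⟨-x, W.neg_mem hx, fun e => by simp [hX, Left.sign_neg]⟩
  · rintro X ⟨x, hx, hX⟩ Y ⟨y, hy, hY⟩
    obtain ⟨ε, hε⟩ := exists_sign_eq_sComp x y
    obtain rfl : X = _ := funext hX
    obtain rfl : Y = _ := funext hY
    exact ⟨x + ε • y, W.add_mem hx (W.smul_mem _ hy), fun e => (hε e).symm⟩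
  · rintro X ⟨x, hx, hX⟩ Y ⟨y, hy, hY⟩ e hXe hYe
    rw [hX, sign_eq_one_iff] at hXe
    rw [hY, sign_eq_neg_one_iff] at hYe
    have hYe' : 0 < -y e := by linarith
    refine ⟨fun f => SignType.sign ((-y e) * x f + x e * y f),
      ⟨(-y e) • x + x e • y, W.add_mem (W.smul_mem _ hx) (W.smul_mem _ hy), fun f => rfl⟩,
      ?_, ?_, ?_, ?_⟩
    · simp only [sign_eq_zero_iff]; ring
    · intro f hf
      simp only [_root_.posPart, Set.mem_union, Set.mem_ofPred_eq, hX, hY, sign_eq_one_iff] at hf ⊢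
      by_contra! h
      nlinarith [mul_nonneg hYe'.le (neg_nonneg.2 h.1), mul_nonneg hXe.le (neg_nonneg.2 h.2)]
    · intro f hf
      simp only [_root_.negPart, Set.mem_union, Set.mem_ofPred_eq, hX, hY, sign_eq_neg_one_iff] at hf ⊢
      by_contra! h
      nlinarith [mul_nonneg hYe'.le h.1, mul_nonneg hXe.le h.2]
    · intro f hf
      simp only [supp, _root_.posPart, _root_.negPart, Set.mem_union, Set.mem_sdiff,
        Set.mem_inter_iff, Set.mem_ofPred_eq, hX, hY, ne_eq, sign_eq_neg_one_iff, sign_eq_one_iff,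
        sign_eq_zero_iff, not_not] at hf ⊢
      rcases hf with ((⟨h1, h2⟩ | ⟨h1, h2⟩) | ⟨h1, h2⟩) | ⟨h1, h2⟩
      · simp [h2, h1, hYe.ne]
      · simp [h2, h1, hXe.ne']
      · exact (add_pos (mul_pos hYe' h1) (mul_pos hXe h2)).ne'
      · exact (add_neg (mul_neg_of_pos_of_neg hYe' h1) (mul_neg_of_pos_of_neg hXe h2)).ne

/-- The step of conformal decomposition: a vector `x` that does not have minimal support can be
replaced by one of smaller support all of whose nonzero signs agree with those of `x`. -/
lemma exists_conformal_smaller {E : Type*} [Finite E] (W : Submodule ℝ (E → ℝ)) {x y : E → ℝ}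
    (hx : x ∈ W) (hy : y ∈ W) (hy0 : y ≠ 0) (hsub : ∀ e, x e = 0 → y e = 0)
    (hne : ∃ e, x e ≠ 0 ∧ y e = 0) :
    ∃ z ∈ W, z ≠ 0 ∧ (∀ e, 0 ≤ x e * z e) ∧ (∀ e, x e = 0 → z e = 0) ∧
      ∃ e, x e ≠ 0 ∧ z e = 0 := by
  classical
  cases nonempty_fintype E
  wlog hpos : ∃ e, 0 < x e * y e generalizing y
  · obtain ⟨e, he⟩ := Function.ne_iff.1 hy0
    refine this (y := -y) (W.neg_mem hy) (neg_ne_zero.2 hy0) (fun e h => by simp [hsub e h])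
      (by simpa using hne) ⟨e, ?_⟩
    push Not at hpos
    have hxe : x e ≠ 0 := fun h => he (hsub e h)
    have := lt_of_le_of_ne (hpos e) (mul_ne_zero hxe he)
    simp only [Pi.neg_apply]; linarith
  -- As `y m / x m` is maximal, `(y m / x m) x - y` vanishes at `m` and has no sign opposite to `x`.
  obtain ⟨m, -, hm⟩ := Finset.exists_max_image (Finset.univ : Finset E) (fun e => y e / x e)
    ⟨hpos.choose, Finset.mem_univ _⟩
  obtain ⟨p, hp⟩ := hpos
  have hdiv : 0 < y m / x m := by
    refine lt_of_lt_of_le ?_ (hm p (Finset.mem_univ _))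
    rcases mul_pos_iff.1 hp with h | h
    · exact div_pos h.2 h.1
    · exact div_pos_of_neg_of_neg h.2 h.1
  have hxm : x m ≠ 0 := by rintro h; simp [h] at hdiv
  obtain ⟨q, hq, hyq⟩ := hne
  refine ⟨(y m / x m) • x - y, W.sub_mem (W.smul_mem _ hx) hy, ?_, ?_, ?_, m, hxm, ?_⟩
  · intro h
    have := congrFun h q
    simp [hyq, hq, hdiv.ne'] at this
  · intro e
    by_cases he : x e = 0
    · simp [he]
    · have h1 := hm e (Finset.mem_univ _)
      have h2 : x e * ((y m / x m) * x e - y e) = x e ^ 2 * (y m / x m - y e / x e) := by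
        field_simp
      simp only [Pi.sub_apply, Pi.smul_apply, smul_eq_mul, h2]
      exact mul_nonneg (sq_nonneg _) (sub_nonneg.2 h1)
  · intro e he
    simp [he, hsub e he]
  · simp [div_mul_cancel₀ _ hxm]

lemma signReversing_sign_iff {E : Type*} (bar : E → E) (x : E → ℝ) :
    SignReversing bar (fun e => SignType.sign (x e)) ↔ ∀ e, x e * x (bar e) ≤ 0 := by
  simp only [SignReversing, ← sign_mul, sign_nonpos_iff]

/-- A sign-reversing nonzero vector of minimal support is a circuit. -/
lemma exists_signReversing_circuit {E : Type*} [Finite E] (bar : E → E)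
    (W : Submodule ℝ (E → ℝ)) {x : E → ℝ} (hx : x ∈ W) (hx0 : x ≠ 0)
    (hrev : ∀ e, x e * x (bar e) ≤ 0) :
    ∃ C, IsCircuit (signVectors W) C ∧ SignReversing bar C := by
  classical
  induction hk : {e | x e ≠ 0}.ncard using Nat.strong_induction_on generalizing x with
  | _ k ih =>
  by_cases hC : IsCircuit (signVectors W) (fun e => SignType.sign (x e))
  · exact ⟨_, hC, (signReversing_sign_iff bar x).2 hrev⟩
  have hC' : ∃ Y ∈ signVectors W, Y ≠ 0 ∧ supp Y ⊂ supp (fun e => SignType.sign (x e)) := by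
    by_contra! h
    refine hC ⟨⟨x, hx, fun e => rfl⟩, fun h0 => hx0 ?_, h⟩
    funext e
    simpa using congrFun h0 e
  obtain ⟨Y, ⟨y, hy, hY⟩, hY0, hss⟩ := hC'
  obtain rfl : Y = _ := funext hY
  obtain ⟨hsub, hnot⟩ := hss
  obtain ⟨q, hq, hyq⟩ := Set.not_subset.1 hnot
  obtain ⟨z, hz, hz0, hpos, hzsub, m, hxm, hzm⟩ := exists_conformal_smaller W hx hy
    (by rintro rfl; exact hY0 (by ext e; simp))
    (fun e he => by
      by_contra hye
      exact (hsub (a := e) (by simpa [supp] using hye)) (by simp [he]))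
    ⟨q, by simpa [supp] using hq, by simpa [supp] using hyq⟩
  refine ih _ ?_ hz hz0 (fun e => ?_) rfl
  · rw [← hk]
    refine Set.ncard_lt_ncard ⟨fun e he hxe => he (hzsub e hxe), fun h => ?_⟩ (Set.toFinite _)
    exact h (a := m) hxm hzm
  · by_contra! h
    have h1 : z e ≠ 0 := by rintro h'; simp [h'] at h
    have h2 : z (bar e) ≠ 0 := by rintro h'; simp [h'] at h
    have h3 : 0 < x e * z e :=
      lt_of_le_of_ne (hpos e) (mul_ne_zero (fun h' => h1 (hzsub e h')) h1).symm
    have h4 : 0 < x (bar e) * z (bar e) :=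
      lt_of_le_of_ne (hpos _) (mul_ne_zero (fun h' => h2 (hzsub _ h')) h2).symm
    nlinarith [mul_pos h3 h4, mul_nonneg (neg_nonneg.2 (hrev e)) h.le]

/-! ### The Fiedler–Pták characterization of P-matrices -/

/-- The matrix `diag a * M + diag b`, whose `i`-th row is `aᵢ Mᵢ + bᵢ eᵢ`. -/
def rowMix {n : ℕ} (M : Matrix (Fin n) (Fin n) ℝ) (a b : Fin n → ℝ) :
    Matrix (Fin n) (Fin n) ℝ :=
  Matrix.of fun i => a i • M i + b i • (1 : Matrix (Fin n) (Fin n) ℝ) i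

lemma rowMix_mulVec {n : ℕ} (M : Matrix (Fin n) (Fin n) ℝ) (a b x : Fin n → ℝ) (i : Fin n) :
    (rowMix M a b).mulVec x i = a i * M.mulVec x i + b i * x i := by
  have h : (rowMix M a b).mulVec x i = (a i • M i + b i • (1 : Matrix (Fin n) (Fin n) ℝ) i) ⬝ᵥ x :=
    rfl
  have h1 : (1 : Matrix (Fin n) (Fin n) ℝ) i ⬝ᵥ x = x i := congrFun (Matrix.one_mulVec x) i
  rw [h, add_dotProduct, smul_dotProduct, smul_dotProduct, h1]
  rfl

/-- Replacing the rows outside `s` by identity rows turns the principal minor on `s` into the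
determinant of an `n × n` matrix. -/
lemma det_rowMix_indicator {n : ℕ} (M : Matrix (Fin n) (Fin n) ℝ) (s : Finset (Fin n)) :
    (rowMix M (fun i => if i ∈ s then 1 else 0) (fun i => if i ∈ s then 0 else 1)).det =
      (M.submatrix (fun i : s => (i : Fin n)) (fun j : s => (j : Fin n))).det := by
  rw [Matrix.twoBlockTriangular_det _ (fun i => i ∈ s)]
  · have h1 : Matrix.toSquareBlockProp (rowMix M (fun i => if i ∈ s then 1 else 0)
        (fun i => if i ∈ s then 0 else 1)) (fun i => i ∈ s) =
        M.submatrix (fun i : s => (i : Fin n)) (fun j : s => (j : Fin n)) := by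
      ext i j
      simp [Matrix.toSquareBlockProp, rowMix, i.2]
    have h2 : Matrix.toSquareBlockProp (rowMix M (fun i => if i ∈ s then 1 else 0)
        (fun i => if i ∈ s then 0 else 1)) (fun i => ¬ i ∈ s) = 1 := by
      ext i j
      simp [Matrix.toSquareBlockProp, rowMix, i.2, Matrix.one_apply, Subtype.ext_iff]
    rw [h1, h2, Matrix.det_one, mul_one]
    congr!
  · intro i hi j hj
    have : i ≠ j := by rintro rfl; exact hi hj
    simp [rowMix, hi, this]

lemma det_rowMix_split {n : ℕ} (M : Matrix (Fin n) (Fin n) ℝ) (a b : Fin n → ℝ) (i : Fin n) :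
    (rowMix M a b).det =
      a i * (rowMix M (Function.update a i 1) (Function.update b i 0)).det +
      b i * (rowMix M (Function.update a i 0) (Function.update b i 1)).det := by
  have key : ∀ c d : ℝ, rowMix M (Function.update a i c) (Function.update b i d) =
      (rowMix M a b).updateRow i (c • M i + d • (1 : Matrix (Fin n) (Fin n) ℝ) i) := by
    intro c d
    ext k l
    by_cases hk : k = i
    · subst hk; simp [rowMix]
    · simp [rowMix, hk]
  have h := key (a i) (b i)
  rw [Function.update_eq_self, Function.update_eq_self] at h
  conv_lhs => rw [h]
  rw [key, key, Matrix.det_updateRow_add, Matrix.det_updateRow_smul, Matrix.det_updateRow_smul]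
  simp

lemma IsPMatrix.det_rowMix_pos {n : ℕ} {M : Matrix (Fin n) (Fin n) ℝ} (hM : IsPMatrix M)
    (a b : Fin n → ℝ) (ha : ∀ i, 0 ≤ a i) (hb : ∀ i, 0 ≤ b i) (hab : ∀ i, 0 < a i + b i) :
    0 < (rowMix M a b).det := by
  classical
  -- Induct on the set `t` of rows not yet known to be a row of `M` or of the identity.
  suffices H : ∀ t : Finset (Fin n), ∀ a b : Fin n → ℝ, (∀ i, 0 ≤ a i) → (∀ i, 0 ≤ b i) →
      (∀ i, 0 < a i + b i) → (∀ i ∉ t, (a i = 1 ∧ b i = 0) ∨ (a i = 0 ∧ b i = 1)) →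
      0 < (rowMix M a b).det from
    H Finset.univ a b ha hb hab (fun i hi => absurd (Finset.mem_univ i) hi)
  intro t
  induction t using Finset.induction_on with
  | empty =>
    intro a b _ _ _ h
    let s : Finset (Fin n) := Finset.univ.filter (fun i => a i = 1)
    have hsa : a = fun i => if i ∈ s then 1 else 0 := by
      funext i
      rcases h i (Finset.notMem_empty i) with h | h <;> simp [s, h.1]
    have hsb : b = fun i => if i ∈ s then 0 else 1 := by
      funext i
      rcases h i (Finset.notMem_empty i) with h | h <;> simp [s, h.1, h.2]
    rw [hsa, hsb, det_rowMix_indicator]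
    rcases s.eq_empty_or_nonempty with hs | hs
    · have : IsEmpty s := by rw [hs]; infer_instance
      rw [Matrix.det_isEmpty]; exact one_pos
    · exact hM s hs
  | insert i t _ ih =>
    intro a b ha hb hab h
    have step : ∀ c d : ℝ, ((c = 1 ∧ d = 0) ∨ (c = 0 ∧ d = 1)) →
        0 < (rowMix M (Function.update a i c) (Function.update b i d)).det := by
      intro c d hcd
      apply ih <;> intro k <;> by_cases hk : k = i
      · subst hk; rcases hcd with h | h <;> simp [h.1]
      · simpa [hk] using ha k
      · subst hk; rcases hcd with h | h <;> simp [h.2]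
      · simpa [hk] using hb k
      · subst hk; rcases hcd with h | h <;> simp [h.1, h.2]
      · simpa [hk] using hab k
      · intro _; subst hk; simpa using hcd
      · intro hkt; simpa [hk] using h k (by simp [hk, hkt])
    rw [det_rowMix_split M a b i]
    have h1 := step 1 0 (Or.inl ⟨rfl, rfl⟩)
    have h2 := step 0 1 (Or.inr ⟨rfl, rfl⟩)
    rcases (ha i).lt_or_eq with hai | hai
    · exact add_pos_of_pos_of_nonneg (mul_pos hai h1) (mul_nonneg (hb i) h2.le)
    · have hbi : 0 < b i := by linarith [hab i]
      exact add_pos_of_nonneg_of_pos (mul_nonneg (ha i) h1.le) (mul_pos hbi h2)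

/-- A P-matrix reverses the sign of no nonzero vector. -/
lemma IsPMatrix.eq_zero_of_reversing {n : ℕ} {M : Matrix (Fin n) (Fin n) ℝ} (hM : IsPMatrix M)
    {x : Fin n → ℝ} (hx : ∀ i, M.mulVec x i * x i ≤ 0) : x = 0 := by
  by_contra hx0
  have hrow : ∀ i, ∃ a b : ℝ, 0 ≤ a ∧ 0 ≤ b ∧ 0 < a + b ∧ a * M.mulVec x i + b * x i = 0 := by
    intro i
    by_cases hi : x i = 0
    · exact ⟨0, 1, by simp, by simp, by simp, by simp [hi]⟩
    · refine ⟨|x i|, |M.mulVec x i|, abs_nonneg _, abs_nonneg _,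
        add_pos_of_pos_of_nonneg (abs_pos.2 hi) (abs_nonneg _), ?_⟩
      rcases mul_nonpos_iff.1 (hx i) with h | h
      · rw [abs_of_nonpos h.2, abs_of_nonneg h.1]; ring
      · rw [abs_of_nonneg h.2, abs_of_nonpos h.1]; ring
  choose a b ha hb hab hxab using hrow
  refine (hM.det_rowMix_pos a b ha hb hab).ne' (Matrix.exists_mulVec_eq_zero_iff.1 ⟨x, hx0, ?_⟩)
  funext i
  rw [rowMix_mulVec, hxab, Pi.zero_apply]

/-- If every real vector whose sign is reversed by `M` vanishes, then `M` is a P-matrix. -/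
lemma isPMatrix_of_reversing {n : ℕ} {M : Matrix (Fin n) (Fin n) ℝ}
    (h : ∀ x : Fin n → ℝ, (∀ i, M.mulVec x i * x i ≤ 0) → x = 0) : IsPMatrix M := by
  intro s _
  by_contra! hs
  let f : ℝ → ℝ := fun u => (rowMix M (fun i => if i ∈ s then 1 - u else 0)
    (fun i => if i ∈ s then u else 1)).det
  have hf : Continuous f := by
    refine Continuous.matrix_det (continuous_matrix fun i j => ?_)
    by_cases hi : i ∈ s <;> simp only [rowMix, hi, if_true, if_false, Matrix.of_apply,
      Pi.add_apply, Pi.smul_apply, smul_eq_mul] <;> fun_prop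
  have hf0 : f 0 ≤ 0 := by
    rw [← det_rowMix_indicator] at hs
    simpa [f] using hs
  have hf1 : 0 ≤ f 1 := by
    have : rowMix M (fun i => if i ∈ s then (1 : ℝ) - 1 else 0)
        (fun i => if i ∈ s then 1 else 1) = 1 := by
      ext i j; simp [rowMix]
    simp only [f, this, Matrix.det_one, zero_le_one]
  obtain ⟨u, ⟨hu0, hu1⟩, hu⟩ :=
    intermediate_value_Icc (zero_le_one' ℝ) hf.continuousOn ⟨hf0, hf1⟩
  obtain ⟨x, hx0, hx⟩ := Matrix.exists_mulVec_eq_zero_iff.2 hu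
  refine hx0 (h x fun i => ?_)
  have hi := congrFun hx i
  rw [rowMix_mulVec, Pi.zero_apply] at hi
  by_cases his : i ∈ s
  · simp only [his, if_true] at hi
    by_contra! hlt
    have hsq : 0 < x i ^ 2 := by
      have : x i ≠ 0 := by rintro h'; simp [h'] at hlt
      positivity
    have : (1 - u) * (M.mulVec x i * x i) + u * x i ^ 2 = 0 := by linear_combination x i * hi
    rcases hu0.lt_or_eq with h' | h'
    · nlinarith [mul_nonneg (sub_nonneg.2 hu1) hlt.le, mul_pos h' hsq]
    · rw [← h'] at this; linarith
  · simp only [his, if_false, zero_mul, one_mul, zero_add] at hi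
    simp [hi]

/-! ### Realizable P-matroids -/

/-- The solution space of `[Iₙ −M] x = 0`. -/
def lcpSpace {n : ℕ} (M : Matrix (Fin n) (Fin n) ℝ) : Submodule ℝ (Fin n ⊕ Fin n → ℝ) where
  carrier := {x | ∀ i, x (Sum.inl i) = M.mulVec (fun j => x (Sum.inr j)) i}
  zero_mem' i := congrFun (Matrix.mulVec_zero M).symm i
  add_mem' {x y} hx hy i := by
    have := congrFun (Matrix.mulVec_add M (fun j => x (Sum.inr j)) (fun j => y (Sum.inr j))) i
    simp only [Pi.add_apply, hx i, hy i]
    exact this.symm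
  smul_mem' c x hx i := by
    have := congrFun (Matrix.mulVec_smul M c (fun j => x (Sum.inr j))) i
    simp only [Pi.smul_apply, hx i]
    exact this.symm

/-- An LCP-realizable oriented matroid is a P-matroid iff its realization
matrix is a P-matrix. -/
theorem pmatroid_iff_pmatrix {n : ℕ} (M : Matrix (Fin n) (Fin n) ℝ)
    (V : Set (Fin n ⊕ Fin n → SignType)) (hreal : Realizes M V) :
    IsPMatroid Sum.swap V ↔ IsPMatrix M := by
  obtain rfl : V = signVectors (lcpSpace M) := hreal
  constructor
  · rintro ⟨-, hC⟩
    refine isPMatrix_of_reversing fun x hx => ?_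
    by_contra hx0
    obtain ⟨C, hC1, hC2⟩ := exists_signReversing_circuit Sum.swap (lcpSpace M)
      (x := Sum.elim (M.mulVec x) x) (fun i => rfl)
      (fun h => hx0 (funext fun i => congrFun h (Sum.inr i)))
      (by
        rintro (i | i)
        · exact hx i
        · simpa [mul_comm] using hx i)
    exact hC C hC1 hC2
  · refine fun hM => ⟨isOM_signVectors _, ?_⟩
    rintro C ⟨⟨x, hx, hCx⟩, hC0, -⟩ hrev
    obtain rfl : C = _ := funext hCx
    rw [signReversing_sign_iff] at hrev
    have h0 : (fun j => x (Sum.inr j)) = 0 := hM.eq_zero_of_reversing fun i => by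
      have := hrev (Sum.inl i)
      rwa [hx i] at this
    refine hC0 (funext ?_)
    rintro (i | i)
    · simp [hx i, h0]
    · simpa using congrFun h0 i
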